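/- Let M₁ and M₂ be indecomposable representations of Q and let 0 → M₁ → E → M₂ → 0 be a non-split short exact sequence in rep Q. Then E is decomposable if and only if Hom(M₁, M₂) ≠ 0. -/

import Mathlib

open scoped Classical

noncomputable section

namespace CambrianA

/-! ### Combinatorics of a type `A_{n+2}` quiver.

Vertices are `1, …, n+2`.  For `1 ≤ i ≤ n+1`, `ε i = true` means that the arrow between
`i` and `i+1` is oriented `i → i+1` (`i` is *upper-barred*), and `ε i = false` means it is
oriented `(i+1) → i` (`i` is *lower-barred*). -/

/-- `MaxIncr n ε i j` : the path `i → i+1 → ⋯ → j` is a maximal increasing path of `Q`. -/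
def MaxIncr (n : ℕ) (ε : ℕ → Bool) (i j : ℕ) : Prop :=
  1 ≤ i ∧ i ≤ j ∧ j ≤ n + 2 ∧ (∀ ℓ, i ≤ ℓ → ℓ < j → ε ℓ = true) ∧
    (i = 1 ∨ ε (i - 1) = false) ∧ (j = n + 2 ∨ ε j = false)

/-- `MaxDecr n ε i j` : the path `i → i-1 → ⋯ → j` is a maximal decreasing path of `Q`. -/
def MaxDecr (n : ℕ) (ε : ℕ → Bool) (i j : ℕ) : Prop :=
  1 ≤ j ∧ j ≤ i ∧ i ≤ n + 2 ∧ (∀ ℓ, j ≤ ℓ → ℓ < i → ε ℓ = false) ∧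
    (i = n + 2 ∨ ε i = true) ∧ (j = 1 ∨ ε (j - 1) = true)

/-- Vertices of the polygon lying on the lower boundary: `0`, `n+2` and lower-barred ones. -/
def LowerVertex (n : ℕ) (ε : ℕ → Bool) (x : ℕ) : Prop :=
  x = 0 ∨ x = n + 2 ∨ (1 ≤ x ∧ x ≤ n + 1 ∧ ε x = false)

/-- Vertices of the polygon lying on the upper boundary: `0`, `n+2` and upper-barred ones. -/
def UpperVertex (n : ℕ) (ε : ℕ → Bool) (x : ℕ) : Prop :=
  x = 0 ∨ x = n + 2 ∨ (1 ≤ x ∧ x ≤ n + 1 ∧ ε x = true)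

/-- `(a,b)` is a lower boundary edge: `a < b` are consecutive lower vertices. -/
def LowerEdge (n : ℕ) (ε : ℕ → Bool) (a b : ℕ) : Prop :=
  LowerVertex n ε a ∧ LowerVertex n ε b ∧ a < b ∧
    ∀ c, LowerVertex n ε c → ¬(a < c ∧ c < b)

/-- `(a,b)` is an upper boundary edge: `a < b` are consecutive upper vertices. -/
def UpperEdge (n : ℕ) (ε : ℕ → Bool) (a b : ℕ) : Prop :=
  UpperVertex n ε a ∧ UpperVertex n ε b ∧ a < b ∧
    ∀ c, UpperVertex n ε c → ¬(a < c ∧ c < b)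

def BoundaryEdge (n : ℕ) (ε : ℕ → Bool) (a b : ℕ) : Prop :=
  LowerEdge n ε a b ∨ UpperEdge n ε a b

/-- `IsHook n ε a lo hi` : the hook of the arrow of `Q` between `a` and `a+1` is the
maximal path supported on the interval `[lo, hi]`.
If `ε a = true` (arrow `a → a+1`, source `a`), the hook is the maximal decreasing path
starting at `a`; if `ε a = false` (arrow `a+1 → a`, source `a+1`), the hook is the
maximal increasing path starting at `a+1`. -/
def IsHook (n : ℕ) (ε : ℕ → Bool) (a lo hi : ℕ) : Prop :=
  if ε a = true then
    hi = a ∧ 1 ≤ lo ∧ lo ≤ a ∧ (∀ ℓ, lo ≤ ℓ → ℓ < a → ε ℓ = false) ∧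
      (lo = 1 ∨ ε (lo - 1) = true)
  else
    lo = a + 1 ∧ a + 1 ≤ hi ∧ hi ≤ n + 2 ∧ (∀ ℓ, a + 1 ≤ ℓ → ℓ < hi → ε ℓ = true) ∧
      (hi = n + 2 ∨ ε hi = false)

/-- `IsCohook n ε a lo hi` : the cohook of the arrow of `Q` between `a` and `a+1` is the
maximal path supported on the interval `[lo, hi]`, ending at the target of the arrow. -/
def IsCohook (n : ℕ) (ε : ℕ → Bool) (a lo hi : ℕ) : Prop :=
  if ε a = true then
    lo = a + 1 ∧ a + 1 ≤ hi ∧ hi ≤ n + 2 ∧ (∀ ℓ, a + 1 ≤ ℓ → ℓ < hi → ε ℓ = false) ∧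
      (hi = n + 2 ∨ ε hi = true)
  else
    hi = a ∧ 1 ≤ lo ∧ lo ≤ a ∧ (∀ ℓ, lo ≤ ℓ → ℓ < a → ε ℓ = true) ∧
      (lo = 1 ∨ ε (lo - 1) = false)

/-- Counterclockwise neighbor `R⁻¹(ℓ)` of the vertex `ℓ` of the polygon `P(Q)`, for the
cyclic order `0`, lower-barred vertices increasing, `n+2`, upper-barred vertices
decreasing. -/
def Rinv (n : ℕ) (ε : ℕ → Bool) (ℓ : ℕ) : ℕ :=
  if ℓ = n + 2 then sSup ({0} ∪ {x | 1 ≤ x ∧ x ≤ n + 1 ∧ ε x = true})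
  else if 1 ≤ ℓ ∧ ℓ ≤ n + 1 ∧ ε ℓ = true then
    sSup ({0} ∪ {x | 1 ≤ x ∧ x < ℓ ∧ ε x = true})
  else
    sInf ({n + 2} ∪ {x | ℓ < x ∧ x ≤ n + 1 ∧ ε x = false})

/-- `γ(i′,j′)` is a pivot of `γ(i,j)`. -/
def IsPivot (n : ℕ) (ε : ℕ → Bool) (i j i' j' : ℕ) : Prop :=
  (i' = Rinv n ε i ∧ j' = j ∧ Rinv n ε i < j) ∨
    (i' = i ∧ j' = Rinv n ε j ∧ i < Rinv n ε j)

/-! ### Geometry of the polygon `P(Q)`.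

The plane is identified with `ℂ`; `p x` is the vertex of the polygon labeled `x`,
for `0 ≤ x ≤ n+2`. -/

/-- The hypotheses on the points `p 0, …, p (n+2)` realizing the polygon `P(Q)`:
strictly increasing `x`-coordinates; `p 0` and `p (n+2)` on a common horizontal line `L`;
upper-barred vertices above `L`, lower-barred vertices below `L`; convex position. -/
def PolyPts (n : ℕ) (ε : ℕ → Bool) (p : ℕ → ℂ) : Prop :=
  (∀ a b, a < b → b ≤ n + 2 → (p a).re < (p b).re) ∧
    (p (n + 2)).im = (p 0).im ∧
    (∀ i, 1 ≤ i → i ≤ n + 1 →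
      (ε i = true → (p 0).im < (p i).im) ∧ (ε i = false → (p i).im < (p 0).im)) ∧
    ∀ i, i ≤ n + 2 → p i ∉ convexHull ℝ (p '' {j | j ≤ n + 2 ∧ j ≠ i})

/-- The line segment `γ(e.1, e.2)` of the polygon. -/
def Seg (p : ℕ → ℂ) (e : ℕ × ℕ) : Set ℂ := segment ℝ (p e.1) (p e.2)

/-- Two segments cross when they intersect in a point that is not a common endpoint. -/
def Cross (p : ℕ → ℂ) (e f : ℕ × ℕ) : Prop :=
  ∃ z, z ∈ Seg p e ∧ z ∈ Seg p f ∧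
    ¬((z = p e.1 ∨ z = p e.2) ∧ (z = p f.1 ∨ z = p f.2))

/-- Slope of the segment `γ(e.1, e.2)`. -/
def slope (p : ℕ → ℂ) (e : ℕ × ℕ) : ℝ :=
  ((p e.2).im - (p e.1).im) / ((p e.2).re - (p e.1).re)

def ValidPair (n : ℕ) (e : ℕ × ℕ) : Prop := e.1 < e.2 ∧ e.2 ≤ n + 2

/-- A triangulation of `P(Q)`: a maximal collection of pairwise noncrossing segments. -/
def IsTriangulation (n : ℕ) (p : ℕ → ℂ) (T : Finset (ℕ × ℕ)) : Prop :=
  (∀ e ∈ T, ValidPair n e) ∧ (∀ e ∈ T, ∀ f ∈ T, e ≠ f → ¬Cross p e f) ∧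
    ∀ e, ValidPair n e → e ∉ T → ∃ f ∈ T, Cross p e f

/-- Cross product of two planar vectors; positive iff `(u, v)` is counterclockwise. -/
def cross2 (u v : ℂ) : ℝ := u.re * v.im - u.im * v.re

/-- Arrows of the adjacency quiver `Q(T)` of a triangulation `T`: `e → f` whenever
`e` and `f` are sides of a common triangle of `T` and `f` follows `e` going
counterclockwise around that triangle. -/
def TriArrow (p : ℕ → ℂ) (T : Finset (ℕ × ℕ)) (e f : ℕ × ℕ) : Prop :=
  ∃ a b c : ℕ, a < b ∧ b < c ∧ (a, b) ∈ T ∧ (b, c) ∈ T ∧ (a, c) ∈ T ∧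
    ((0 < cross2 (p b - p a) (p c - p a) ∧
        ((e = (a, b) ∧ f = (b, c)) ∨ (e = (b, c) ∧ f = (a, c)) ∨
          (e = (a, c) ∧ f = (a, b)))) ∨
      (cross2 (p b - p a) (p c - p a) < 0 ∧
        ((e = (a, c) ∧ f = (b, c)) ∨ (e = (b, c) ∧ f = (a, b)) ∨
          (e = (a, b) ∧ f = (a, c)))))

/-! ### Representations of `Q` -/

/-- A finite dimensional representation of the quiver `Q` of type `A_{n+2}` over `k`.
The vector spaces are indexed by `ℕ`, and are required to vanish outside the set
`{1, …, n+2}` of vertices of `Q`.  For each `i`, `fwd i : V i → V (i+1)` is the structure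
map of the arrow `i → i+1` (it is required to vanish when the arrow is oriented in the
other direction, i.e. `ε i = false`) and `bwd i : V (i+1) → V i` is the structure map of
the arrow `i+1 → i` (required to vanish when `ε i = true`). -/
structure ARep (k : Type) [Field k] (n : ℕ) (ε : ℕ → Bool) where
  V : ℕ → Type
  [acg : ∀ x, AddCommGroup (V x)]
  [mod : ∀ x, Module k (V x)]
  [fdim : ∀ x, FiniteDimensional k (V x)]
  triv : ∀ x, x = 0 ∨ n + 2 < x → ∀ v : V x, v = 0
  fwd : ∀ i, V i →ₗ[k] V (i + 1)
  bwd : ∀ i, V (i + 1) →ₗ[k] V i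
  fwd_zero : ∀ i, ε i = false → fwd i = 0
  bwd_zero : ∀ i, ε i = true → bwd i = 0

attribute [instance] ARep.acg ARep.mod ARep.fdim

variable {k : Type} [Field k] {n : ℕ} {ε : ℕ → Bool}

/-- Morphisms of representations. -/
@[ext]
structure ARep.Hom (M N : ARep k n ε) where
  app : ∀ x, M.V x →ₗ[k] N.V x
  comm_fwd : ∀ i (v : M.V i), app (i + 1) (M.fwd i v) = N.fwd i (app i v)
  comm_bwd : ∀ i (v : M.V (i + 1)), app i (M.bwd i v) = N.bwd i (app (i + 1) v)

/-- The identity morphism. -/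
def ARep.Hom.id (M : ARep k n ε) : M.Hom M :=
  ⟨fun _ => LinearMap.id, fun _ _ => rfl, fun _ _ => rfl⟩

/-- Composition of morphisms. -/
def ARep.Hom.comp {M N P : ARep k n ε} (g : N.Hom P) (f : M.Hom N) : M.Hom P where
  app x := (g.app x).comp (f.app x)
  comm_fwd i v := by simp only [LinearMap.comp_apply, f.comm_fwd, g.comm_fwd]
  comm_bwd i v := by simp only [LinearMap.comp_apply, f.comm_bwd, g.comm_bwd]

/-- Sum of two morphisms. -/
def ARep.Hom.add {M N : ARep k n ε} (f g : M.Hom N) : M.Hom N where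
  app x := f.app x + g.app x
  comm_fwd i v := by
    simp only [LinearMap.add_apply, f.comm_fwd, g.comm_fwd, map_add]
  comm_bwd i v := by
    simp only [LinearMap.add_apply, f.comm_bwd, g.comm_bwd, map_add]

/-- Scalar multiple of a morphism. -/
def ARep.Hom.smul {M N : ARep k n ε} (c : k) (f : M.Hom N) : M.Hom N where
  app x := c • f.app x
  comm_fwd i v := by simp only [LinearMap.smul_apply, f.comm_fwd, map_smul]
  comm_bwd i v := by simp only [LinearMap.smul_apply, f.comm_bwd, map_smul]

/-- Isomorphism of representations. -/
def ARep.Iso (M N : ARep k n ε) : Prop :=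
  ∃ f : M.Hom N, ∀ x, Function.Bijective (f.app x)

/-- The zero representation(s). -/
def ARep.IsZero (M : ARep k n ε) : Prop := ∀ x, ∀ v : M.V x, v = 0

/-- The support of a representation. -/
def ARep.supp (M : ARep k n ε) : Set ℕ := {x | ∃ v : M.V x, v ≠ 0}

/-- Direct sum of two representations. -/
def ARep.dsum (M N : ARep k n ε) : ARep k n ε where
  V x := M.V x × N.V x
  acg _ := by infer_instance
  mod _ := by infer_instance
  fdim _ := by infer_instance
  triv x hx v := by
    have h1 := M.triv x hx v.1
    have h2 := N.triv x hx v.2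
    exact Prod.ext h1 h2
  fwd i := (M.fwd i).prodMap (N.fwd i)
  bwd i := (M.bwd i).prodMap (N.bwd i)
  fwd_zero i h := by
    show (M.fwd i).prodMap (N.fwd i) = 0
    rw [M.fwd_zero i h, N.fwd_zero i h]
    apply LinearMap.ext; rintro ⟨a, b⟩; simp
  bwd_zero i h := by
    show (M.bwd i).prodMap (N.bwd i) = 0
    rw [M.bwd_zero i h, N.bwd_zero i h]
    apply LinearMap.ext; rintro ⟨a, b⟩; simp

/-- One dimensional space `k` if `P` holds, `0` otherwise (as a submodule of `k`). -/
def fiber (k : Type) [Field k] (P : Prop) : Submodule k k := if P then ⊤ else ⊥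

/-- The canonical map `fiber k P → fiber k Q` : "identity" if `P ∧ Q`, zero otherwise. -/
def fiberMap (k : Type) [Field k] (P Q : Prop) : fiber k P →ₗ[k] fiber k Q :=
  if h : P ∧ Q then
    { toFun := fun v => ⟨(v : k), by
        have hfib : fiber k Q = ⊤ := if_pos h.2
        rw [hfib]
        exact Submodule.mem_top⟩
      map_add' := fun _ _ => rfl
      map_smul' := fun _ _ => rfl }
  else 0

/-- The zero representation. -/
def zeroRep (k : Type) [Field k] (n : ℕ) (ε : ℕ → Bool) : ARep k n ε where
  V _ := ↥(fiber k False)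
  acg _ := by infer_instance
  mod _ := by infer_instance
  fdim _ := by infer_instance
  triv x _ v := by
    have hfib : fiber k False = ⊥ := if_neg (fun h : False => h.elim)
    obtain ⟨w, hw⟩ := v
    apply Subtype.ext
    have hb : w ∈ (⊥ : Submodule k k) := hfib ▸ hw
    exact (Submodule.mem_bot k).1 hb
  fwd _ := 0
  bwd _ := 0
  fwd_zero _ _ := rfl
  bwd_zero _ _ := rfl

/-- The condition for a vertex `x` to be in the support of the interval representation
`M(i,j)`. -/
def SuppCond (n i j x : ℕ) : Prop := i ≤ x ∧ x ≤ j ∧ 1 ≤ x ∧ x ≤ n + 2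

/-- The interval (string) representation `M(i,j)` of `Q`: one dimensional at each vertex
`x` with `i ≤ x ≤ j`, zero elsewhere, with identity maps on all arrows whose endpoints
both lie in `[i,j]`. -/
def intervalRep (k : Type) [Field k] (n : ℕ) (ε : ℕ → Bool) (i j : ℕ) : ARep k n ε where
  V x := ↥(fiber k (SuppCond n i j x))
  acg _ := by infer_instance
  mod _ := by infer_instance
  fdim _ := by infer_instance
  triv x hx v := by
    have hP : ¬SuppCond n i j x := by simp only [SuppCond]; omega
    have hfib : fiber k (SuppCond n i j x) = ⊥ := if_neg hP
    obtain ⟨w, hw⟩ := v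
    apply Subtype.ext
    have hb : w ∈ (⊥ : Submodule k k) := hfib ▸ hw
    exact (Submodule.mem_bot k).1 hb
  fwd ℓ :=
    if ε ℓ = true then fiberMap k (SuppCond n i j ℓ) (SuppCond n i j (ℓ + 1)) else 0
  bwd ℓ :=
    if ε ℓ = true then 0 else fiberMap k (SuppCond n i j (ℓ + 1)) (SuppCond n i j ℓ)
  fwd_zero ℓ h := by simp [h]
  bwd_zero ℓ h := by simp [h]

/-- Direct sum of a list of representations. -/
def dsumList (k : Type) [Field k] (n : ℕ) (ε : ℕ → Bool) :
    List (ARep k n ε) → ARep k n ε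
  | [] => zeroRep k n ε
  | M :: L => M.dsum (dsumList k n ε L)

/-- Indecomposable representations. -/
def ARep.Indec (M : ARep k n ε) : Prop :=
  ¬M.IsZero ∧ ∀ A B : ARep k n ε, M.Iso (A.dsum B) → A.IsZero ∨ B.IsZero

/-- `A` is a direct summand of `T`. -/
def ARep.IsSummand (A T : ARep k n ε) : Prop := ∃ B : ARep k n ε, T.Iso (A.dsum B)

/-- A representation is basic when it has no repeated indecomposable direct summand. -/
def ARep.Basic (T : ARep k n ε) : Prop :=
  ∀ A : ARep k n ε, A.Indec → ¬(A.dsum A).IsSummand T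

/-- A short exact sequence `0 → B → E → A → 0`. -/
structure SES (B A : ARep k n ε) where
  E : ARep k n ε
  ι : B.Hom E
  π : E.Hom A
  inj : ∀ x, Function.Injective (ι.app x)
  surj : ∀ x, Function.Surjective (π.app x)
  exct : ∀ x (v : E.V x), π.app x v = 0 ↔ ∃ u, ι.app x u = v

/-- A short exact sequence splits. -/
def SES.Splits {B A : ARep k n ε} (σ : SES B A) : Prop :=
  ∃ r : σ.E.Hom B, ∀ x (v : B.V x), r.app x (σ.ι.app x v) = v

/-- `Ext¹(A, B) = 0` : every short exact sequence `0 → B → E → A → 0` splits. -/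
def ExtZero (A B : ARep k n ε) : Prop := ∀ σ : SES B A, σ.Splits

/-- `Ext¹(A,B) ≅ k`, generated by (the class of) a short exact sequence
`0 → B → E → A → 0` with indecomposable middle term `E`: there is a non-split such
sequence `σ` with `σ.E` indecomposable such that every non-split sequence is equivalent
to a nonzero scalar multiple of `σ`. -/
def ExtOneDimIndecMid (A B : ARep k n ε) : Prop :=
  ∃ σ : SES B A, ¬σ.Splits ∧ σ.E.Indec ∧
    ∀ τ : SES B A, ¬τ.Splits → ∃ c : k, c ≠ 0 ∧
      ∃ φ : σ.E.Hom τ.E, (∀ x, Function.Bijective (φ.app x)) ∧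
        (∀ x (v : B.V x), φ.app x (σ.ι.app x v) = τ.ι.app x v) ∧
        (∀ x (v : σ.E.V x), τ.π.app x (φ.app x v) = c • σ.π.app x v)

/-- Almost rigid representations. -/
def AlmostRigid (T : ARep k n ε) : Prop :=
  T.Basic ∧ ∀ A B : ARep k n ε, A.Indec → B.Indec → A.IsSummand T → B.IsSummand T →
    ExtZero A B ∨ ExtOneDimIndecMid A B

/-- Maximal almost rigid representations. -/
def MaxAlmostRigid (T : ARep k n ε) : Prop :=
  AlmostRigid T ∧ ∀ M : ARep k n ε, ¬M.IsZero → ¬AlmostRigid (T.dsum M)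

/-- `f` is a section. -/
def ARep.Hom.IsSection {M N : ARep k n ε} (f : M.Hom N) : Prop :=
  ∃ g : N.Hom M, ∀ x (v : M.V x), g.app x (f.app x v) = v

/-- `f` is a retraction. -/
def ARep.Hom.IsRetraction {M N : ARep k n ε} (f : M.Hom N) : Prop :=
  ∃ g : N.Hom M, ∀ x (v : N.V x), f.app x (g.app x v) = v

/-- Irreducible morphisms: `f` is neither a section nor a retraction, and in every
factorization `f = g ∘ h` either `h` is a section or `g` is a retraction. -/
def ARep.Hom.Irred {M N : ARep k n ε} (f : M.Hom N) : Prop :=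
  ¬f.IsSection ∧ ¬f.IsRetraction ∧
    ∀ (Z : ARep k n ε) (h : M.Hom Z) (g : Z.Hom N),
      (∀ x (v : M.V x), f.app x v = g.app x (h.app x v)) → h.IsSection ∨ g.IsRetraction

/-- Subrepresentations : families of subspaces closed under the structure maps. -/
structure Subrep (M : ARep k n ε) where
  U : ∀ x, Submodule k (M.V x)
  fwd_mem : ∀ i, ∀ v ∈ U i, M.fwd i v ∈ U (i + 1)
  bwd_mem : ∀ i, ∀ v ∈ U (i + 1), M.bwd i v ∈ U i

/-- The central charge `Z(M) = Σ_{x=1}^{n+2} dim_k(M_x) · (p_x − p_{x−1})`. -/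
def charge (p : ℕ → ℂ) (M : ARep k n ε) : ℂ :=
  ∑ x ∈ Finset.Icc 1 (n + 2), (Module.finrank k (M.V x) : ℂ) * (p x - p (x - 1))

/-- The central charge of a subrepresentation. -/
def subCharge (p : ℕ → ℂ) {M : ARep k n ε} (L : Subrep M) : ℂ :=
  ∑ x ∈ Finset.Icc 1 (n + 2), (Module.finrank k (L.U x) : ℂ) * (p x - p (x - 1))

/-- The representation `F(T) = ⊕_{γ(a,b) ∈ T} M(a+1, b)` attached to a collection `T` of
segments of the polygon `P(Q)`. -/
def FRep (k : Type) [Field k] (n : ℕ) (ε : ℕ → Bool) (T : Finset (ℕ × ℕ)) : ARep k n ε :=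
  dsumList k n ε (T.toList.map fun e => intervalRep k n ε (e.1 + 1) e.2)

end CambrianA

/-!
A representation is decomposable if and only if it has an idempotent endomorphism other than `0` and
`1`.

If `Hom(M₁, M₂) = 0`, an idempotent endomorphism `e` of `E` maps `M₁` to itself, hence induces
idempotents of the indecomposables `M₁` and `M₂`, each of which is `0` or `1`. If they agree, `e` is
`0` or `1`; if they differ, `e` or `1 - e` splits the sequence. So `E` is indecomposable.

Conversely, `Hom(M₁, M₂) ≠ 0` forces `dim E_x ≥ 2` at some vertex `x`. Pushing forward and pulling
back subspaces along the arrows to the left of `x` yields a filtration of `E_x`, and so do the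
arrows to the right. An idempotent of `E_x` which preserves both filtrations extends, one vertex at
a time, to an idempotent of `E`. Two filtrations of a space of dimension at least `2` always admit a
common decomposition, so a nontrivial such idempotent exists.
-/

namespace CambrianA

section Idempotents

theorem isIdempotentElem_update {ι : Type*} [DecidableEq ι] {R : ι → Type*} [∀ i, Mul (R i)]
    {e : ∀ i, R i} (he : ∀ i, IsIdempotentElem (e i)) {i : ι} {e₀ : R i}
    (he₀ : IsIdempotentElem e₀) (j : ι) : IsIdempotentElem (Function.update e i e₀ j) := by
  obtain rfl | hj := eq_or_ne j i
  · rwa [Function.update_self]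
  · rw [Function.update_of_ne hj]
    exact he j

variable {k V V' : Type*} [Semiring k] [AddCommMonoid V] [Module k V] [AddCommMonoid V']
  [Module k V'] {e : Module.End k V} {e' : Module.End k V'} {f : V →ₗ[k] V'}

theorem isIdempotentElem_of_injective (hf : Function.Injective f)
    (hfe : ∀ v, f (e v) = e' (f v)) (he' : IsIdempotentElem e') : IsIdempotentElem e :=
  LinearMap.ext fun v => hf <| by
    rw [Module.End.mul_apply, hfe, hfe]
    exact LinearMap.congr_fun he' (f v)

theorem isIdempotentElem_of_surjective (hf : Function.Surjective f)
    (hfe : ∀ v, e' (f v) = f (e v)) (he : IsIdempotentElem e) : IsIdempotentElem e' :=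
  LinearMap.ext <| hf.forall.2 fun v => by
    rw [Module.End.mul_apply, hfe, hfe]
    exact congrArg f (LinearMap.congr_fun he v)

end Idempotents

section SplittingAlongChains

theorem exists_isCompl_forall_le_inf_sup_inf_of_isChain {α : Type*} [Lattice α] [BoundedOrder α]
    [IsModularLattice α] [ComplementedLattice α] [WellFoundedLT α] [WellFoundedGT α] (a : α)
    {S : Set α} (hS : IsChain (· ≤ ·) S) :
    ∃ b, IsCompl a b ∧ ∀ c ∈ S, c ≤ (c ⊓ a) ⊔ (c ⊓ b) := by
  -- A complement of `a` relative to one step of the chain can be enlarged at the next step.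
  suffices key : ∀ c : α, ∃ b ≤ c, Disjoint a b ∧ c ≤ a ⊔ b ∧
      ∀ d ∈ S, d ≤ c → d ≤ (d ⊓ a) ⊔ (d ⊓ b) by
    obtain ⟨b, -, hdisj, htop, hb⟩ := key ⊤
    exact ⟨b, ⟨hdisj, codisjoint_iff_le_sup.2 htop⟩, fun c hc => hb c hc le_top⟩
  intro c
  induction c using WellFoundedLT.induction with
  | ind c ih =>
    obtain ⟨b₀, hb₀c, hdisj₀, hb₀⟩ : ∃ b₀ ≤ c, Disjoint a b₀ ∧
        ∀ d ∈ S, d < c → d ≤ (d ⊓ a) ⊔ (d ⊓ b₀) := by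
      by_cases hlt : {d ∈ S | d < c}.Nonempty
      · obtain ⟨m, hm⟩ := exists_maximal_of_wellFoundedGT _ hlt
        obtain ⟨b₀, hb₀m, hdisj₀, -, hb₀⟩ := ih m hm.prop.2
        refine ⟨b₀, hb₀m.trans hm.prop.2.le, hdisj₀, fun d hd hdc => hb₀ d hd ?_⟩
        exact (hS.total hd hm.prop.1).elim id (hm.le_of_ge ⟨hd, hdc⟩)
      · exact ⟨⊥, bot_le, disjoint_bot_right, fun d hd hdc => (hlt ⟨d, hd, hdc⟩).elim⟩
    obtain ⟨b', hb₀b', hcompl⟩ := (hdisj₀.mono_left (inf_le_right : c ⊓ a ≤ a)).symm.exists_isCompl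
    have hc : c ≤ (c ⊓ a) ⊔ (c ⊓ b') :=
      calc c ≤ (c ⊓ a ⊔ b') ⊓ c := le_inf (hcompl.symm.sup_eq_top ▸ le_top) le_rfl
        _ = (c ⊓ a) ⊔ (b' ⊓ c) := (sup_inf_assoc_of_le b' inf_le_left)
        _ = (c ⊓ a) ⊔ (c ⊓ b') := by rw [inf_comm b']
    refine ⟨c ⊓ b', inf_le_left, ?_, hc.trans (sup_le_sup_right inf_le_right _), ?_⟩
    · rw [disjoint_iff, ← inf_assoc, inf_comm a]
      exact hcompl.symm.inf_eq_bot
    · intro d hd hdc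
      obtain rfl | hdc := hdc.eq_or_lt
      · rwa [← inf_assoc, inf_idem]
      · exact (hb₀ d hd hdc).trans (sup_le_sup_left (inf_le_inf_left d (le_inf hb₀c hb₀b')) _)

variable {k V V' : Type*} [DivisionRing k] [AddCommGroup V] [Module k V] [AddCommGroup V']
  [Module k V']

theorem exists_isProj_subset_invtSubmodule_of_isChain [FiniteDimensional k V]
    (K : Submodule k V) {S : Set (Submodule k V)} (hS : IsChain (· ≤ ·) S) :
    ∃ p : Module.End k V, LinearMap.IsProj K p ∧ S ⊆ p.invtSubmodule := by
  obtain ⟨L, hKL, hL⟩ := exists_isCompl_forall_le_inf_sup_inf_of_isChain K hS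
  refine ⟨K.projection L hKL, ⟨Submodule.projection_apply_mem hKL,
    fun v hv => Submodule.projection_apply_of_mem_left hKL hv⟩, fun C hC v hv => ?_⟩
  obtain ⟨x, hx, y, hy, rfl⟩ := Submodule.mem_sup.1 (hL C hC hv)
  rw [Submodule.mem_comap, map_add, Submodule.projection_apply_of_mem_left hKL hx.2,
    Submodule.projection_apply_of_mem_right hKL hy.2, add_zero]
  exact hx.1

theorem exists_generalizedInverse (f : V →ₗ[k] V') :
    ∃ h : V' →ₗ[k] V, f ∘ₗ h ∘ₗ f = f := by
  obtain ⟨s, hs⟩ := f.rangeRestrict.exists_rightInverse_of_surjective f.range_rangeRestrict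
  obtain ⟨h, hh⟩ := s.exists_extend
  refine ⟨h, LinearMap.ext fun v => ?_⟩
  have hhs : h (f v) = s (f.rangeRestrict v) := LinearMap.congr_fun hh (f.rangeRestrict v)
  rw [LinearMap.comp_apply, LinearMap.comp_apply, hhs]
  exact congrArg Subtype.val (LinearMap.congr_fun hs (f.rangeRestrict v))

theorem exists_generalizedInverse_domain_subset_invtSubmodule [FiniteDimensional k V]
    (f : V →ₗ[k] V') {S : Set (Submodule k V)} (hS : IsChain (· ≤ ·) S) :
    ∃ h : V' →ₗ[k] V, f ∘ₗ h ∘ₗ f = f ∧ S ⊆ Module.End.invtSubmodule (h ∘ₗ f) := by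
  obtain ⟨h, hfh⟩ := exists_generalizedInverse f
  obtain ⟨p, hp, hpS⟩ := exists_isProj_subset_invtSubmodule_of_isChain (LinearMap.ker f) hS
  have hfp : f ∘ₗ p = 0 := LinearMap.ext hp.map_mem
  have hcomp : (LinearMap.id - p) ∘ₗ h ∘ₗ f = LinearMap.id - p := by
    ext v
    have hker : h (f v) - v ∈ LinearMap.ker f := by
      rw [LinearMap.mem_ker, map_sub, sub_eq_zero]
      exact LinearMap.congr_fun hfh v
    have hpv : p (h (f v)) - p v = h (f v) - v := by rw [← map_sub, hp.map_id _ hker]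
    simpa only [LinearMap.comp_apply, LinearMap.sub_apply, LinearMap.id_apply] using
      sub_eq_sub_iff_sub_eq_sub.2 hpv.symm
  refine ⟨(LinearMap.id - p) ∘ₗ h, ?_, ?_⟩
  · rw [LinearMap.comp_assoc, hcomp, LinearMap.comp_sub, LinearMap.comp_id, hfp, sub_zero]
  · rw [LinearMap.comp_assoc, hcomp]
    exact fun C hC v hv => C.sub_mem hv (hpS hC hv)

theorem exists_generalizedInverse_codomain_subset_invtSubmodule [FiniteDimensional k V]
    (g : V' →ₗ[k] V) {S : Set (Submodule k V)} (hS : IsChain (· ≤ ·) S) :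
    ∃ h : V →ₗ[k] V', g ∘ₗ h ∘ₗ g = g ∧ S ⊆ Module.End.invtSubmodule (g ∘ₗ h) := by
  obtain ⟨h, hgh⟩ := exists_generalizedInverse g
  obtain ⟨p, hp, hpS⟩ := exists_isProj_subset_invtSubmodule_of_isChain (LinearMap.range g) hS
  have hghp : g ∘ₗ h ∘ₗ p = p := by
    ext v
    obtain ⟨w, hw⟩ := hp.map_mem v
    rw [LinearMap.comp_apply, LinearMap.comp_apply, ← hw]
    exact LinearMap.congr_fun hgh w
  refine ⟨h ∘ₗ p, LinearMap.ext fun v => ?_, ?_⟩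
  · exact (LinearMap.congr_fun hghp (g v)).trans (hp.map_id _ ⟨v, rfl⟩)
  · rwa [hghp]

theorem exists_isIdempotentElem_pullback [FiniteDimensional k V] (f : V →ₗ[k] V')
    {S : Set (Submodule k V)} (hS : IsChain (· ≤ ·) S) {e' : Module.End k V'}
    (he' : IsIdempotentElem e') (hrange : LinearMap.range f ∈ e'.invtSubmodule)
    (hmap : Submodule.map f '' S ⊆ e'.invtSubmodule) :
    ∃ e : Module.End k V, IsIdempotentElem e ∧ S ⊆ e.invtSubmodule ∧ f ∘ₗ e = e' ∘ₗ f := by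
  obtain ⟨h, hfh, hS'⟩ := exists_generalizedInverse_domain_subset_invtSubmodule f hS
  have hfe : f ∘ₗ h ∘ₗ e' ∘ₗ f = e' ∘ₗ f := by
    ext v
    obtain ⟨w, hw⟩ := hrange ⟨v, rfl⟩
    simp only [LinearMap.comp_apply, ← hw]
    exact LinearMap.congr_fun hfh w
  refine ⟨h ∘ₗ e' ∘ₗ f, ?_, fun C hC v hv => ?_, hfe⟩
  · calc (h ∘ₗ e') ∘ₗ f ∘ₗ h ∘ₗ e' ∘ₗ f = h ∘ₗ (e' * e') ∘ₗ f := by rw [hfe]; rfl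
      _ = h ∘ₗ e' ∘ₗ f := by rw [he'.eq]
  · obtain ⟨c, hc, hce⟩ := hmap ⟨C, hC, rfl⟩ (Submodule.mem_map_of_mem hv)
    rw [Submodule.mem_comap, LinearMap.comp_apply, LinearMap.comp_apply, ← hce]
    exact hS' hC hc

theorem exists_isIdempotentElem_pushforward [FiniteDimensional k V] (g : V' →ₗ[k] V)
    {S : Set (Submodule k V)} (hS : IsChain (· ≤ ·) S) {e' : Module.End k V'}
    (he' : IsIdempotentElem e') (hker : LinearMap.ker g ∈ e'.invtSubmodule)
    (hcomap : Submodule.comap g '' S ⊆ e'.invtSubmodule) :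
    ∃ e : Module.End k V, IsIdempotentElem e ∧ S ⊆ e.invtSubmodule ∧ e ∘ₗ g = g ∘ₗ e' := by
  obtain ⟨h, hgh, hS'⟩ := exists_generalizedInverse_codomain_subset_invtSubmodule g hS
  have heg : (g ∘ₗ e' ∘ₗ h) ∘ₗ g = g ∘ₗ e' := by
    ext v
    have hv : h (g v) - v ∈ LinearMap.ker g := by
      rw [LinearMap.mem_ker, map_sub, sub_eq_zero]
      exact LinearMap.congr_fun hgh v
    have := hker hv
    rwa [Submodule.mem_comap, LinearMap.mem_ker, map_sub, map_sub, sub_eq_zero] at this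
  refine ⟨g ∘ₗ e' ∘ₗ h, ?_, fun C hC v hv => ?_, heg⟩
  · calc ((g ∘ₗ e' ∘ₗ h) ∘ₗ g) ∘ₗ e' ∘ₗ h = g ∘ₗ (e' * e') ∘ₗ h := by rw [heg]; rfl
      _ = g ∘ₗ e' ∘ₗ h := by rw [he'.eq]
  · exact hcomap ⟨C, hC, rfl⟩ (hS' hC hv)

/-- A filtration of `V`, encoded by the set of its steps: a chain of subspaces from `⊥` to `⊤`,
of arbitrary length. -/
structure IsFiltration (S : Set (Submodule k V)) : Prop where
  isChain : IsChain (· ≤ ·) S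
  bot_mem : ⊥ ∈ S
  top_mem : ⊤ ∈ S

theorem isFiltration_univ [Subsingleton V] : IsFiltration (Set.univ : Set (Submodule k V)) :=
  ⟨fun _ _ _ _ h => (h (Subsingleton.elim _ _)).elim, trivial, trivial⟩

/-- The filtration that a filtration `S` of `V` induces on `V'` along a single arrow joining `V` and
`V'`. To treat both orientations at once, the arrow is given by maps `f` and `g` one of which is
zero; the zero map then only contributes `⊥` or `⊤`. -/
def inducedFiltration (f : V →ₗ[k] V') (g : V' →ₗ[k] V) (S : Set (Submodule k V)) :
    Set (Submodule k V') :=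
  Submodule.map f '' S ∪ Submodule.comap g '' S

theorem IsFiltration.induced {f : V →ₗ[k] V'} {g : V' →ₗ[k] V} (hfg : f = 0 ∨ g = 0)
    {S : Set (Submodule k V)} (hS : IsFiltration S) : IsFiltration (inducedFiltration f g S) where
  isChain := by
    have map_le_comap (A B : Submodule k V) : A.map f ≤ B.comap g := by
      obtain rfl | rfl := hfg
      · exact (Submodule.map_zero A).trans_le bot_le
      · exact le_top.trans_eq (Submodule.comap_zero B).symm
    rintro _ (⟨A, hA, rfl⟩ | ⟨A, hA, rfl⟩) _ (⟨B, hB, rfl⟩ | ⟨B, hB, rfl⟩) -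
    · exact (hS.isChain.total hA hB).imp (Submodule.map_mono ·) (Submodule.map_mono ·)
    · exact .inl (map_le_comap A B)
    · exact .inr (map_le_comap B A)
    · exact (hS.isChain.total hA hB).imp (Submodule.comap_mono ·) (Submodule.comap_mono ·)
  bot_mem := .inl ⟨⊥, hS.bot_mem, Submodule.map_bot f⟩
  top_mem := .inr ⟨⊤, hS.top_mem, Submodule.comap_top g⟩

theorem IsFiltration.exists_isIdempotentElem_of_induced [FiniteDimensional k V]
    {f : V →ₗ[k] V'} {g : V' →ₗ[k] V} (hfg : f = 0 ∨ g = 0) {S : Set (Submodule k V)}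
    (hS : IsFiltration S) {e' : Module.End k V'} (he' : IsIdempotentElem e')
    (hind : inducedFiltration f g S ⊆ e'.invtSubmodule) :
    ∃ e : Module.End k V, IsIdempotentElem e ∧ S ⊆ e.invtSubmodule ∧
      f ∘ₗ e = e' ∘ₗ f ∧ e ∘ₗ g = g ∘ₗ e' := by
  have hmap := Set.subset_union_left.trans hind
  have hcomap := Set.subset_union_right.trans hind
  obtain rfl | rfl := hfg
  · obtain ⟨e, he, heS, heg⟩ := exists_isIdempotentElem_pushforward g hS.isChain he'
      (hcomap ⟨⊥, hS.bot_mem, rfl⟩) hcomap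
    exact ⟨e, he, heS, by rw [LinearMap.zero_comp, LinearMap.comp_zero], heg⟩
  · obtain ⟨e, he, heS, hfe⟩ := exists_isIdempotentElem_pullback f hS.isChain he'
      (f.range_eq_map ▸ hmap ⟨⊤, hS.top_mem, rfl⟩) hmap
    exact ⟨e, he, heS, hfe, by rw [LinearMap.zero_comp, LinearMap.comp_zero]⟩

theorem IsFiltration.exists_isIdempotentElem_ne_zero_ne_one [FiniteDimensional k V]
    {S T : Set (Submodule k V)} (hS : IsFiltration S) (hT : IsChain (· ≤ ·) T)
    (hV : 1 < Module.finrank k V) :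
    ∃ e : Module.End k V, IsIdempotentElem e ∧ S ⊆ e.invtSubmodule ∧ T ⊆ e.invtSubmodule ∧
      e ≠ 0 ∧ e ≠ 1 := by
  have : Nontrivial V := Module.nontrivial_of_finrank_pos (zero_lt_one.trans hV)
  -- A projection onto a line in the smallest nonzero step of `S` automatically preserves `S`.
  obtain ⟨C₀, hC₀⟩ := exists_minimal_of_wellFoundedLT (fun C => C ∈ S ∧ C ≠ ⊥)
    ⟨⊤, hS.top_mem, top_ne_bot⟩
  obtain ⟨w, hw, hw0⟩ := C₀.exists_mem_ne_zero_of_ne_bot hC₀.prop.2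
  obtain ⟨p, hp, hpT⟩ := exists_isProj_subset_invtSubmodule_of_isChain (k ∙ w) hT
  have hpw : p w = w := hp.map_id w (Submodule.mem_span_singleton_self w)
  refine ⟨p, hp.isIdempotentElem, fun C hC => ?_, hpT, ?_, ?_⟩
  · obtain rfl | hC0 := eq_or_ne C ⊥
    · exact Module.End.invtSubmodule.bot_mem p
    · have hC₀C : C₀ ≤ C :=
        (hS.isChain.total hC₀.prop.1 hC).elim id (hC₀.le_of_le ⟨hC, hC0⟩)
      have hspan : k ∙ w ≤ C := (Submodule.span_singleton_le_iff_mem w C).2 (hC₀C hw)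
      exact fun v _ => hspan (hp.map_mem v)
  · rintro rfl
    exact hw0 hpw.symm
  · rintro rfl
    have htop : k ∙ w = ⊤ := eq_top_iff.2 fun v _ => hp.map_mem v
    rw [← finrank_top k V, ← htop, finrank_span_singleton hw0] at hV
    exact lt_irrefl _ hV

end SplittingAlongChains

section Representations

variable {k : Type} [Field k] {n : ℕ} {ε : ℕ → Bool} {M N : ARep k n ε}

namespace ARep

/-- `M` is isomorphic to a direct sum of two nonzero representations. -/
def Decomposable (M : ARep k n ε) : Prop :=
  ∃ A B : ARep k n ε, ¬A.IsZero ∧ ¬B.IsZero ∧ M.Iso (A.dsum B)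

theorem Indec.not_decomposable (hM : M.Indec) : ¬M.Decomposable := by
  rintro ⟨A, B, hA, hB, hiso⟩
  exact (hM.2 A B hiso).elim hA hB

theorem Hom.exists_inverse (f : M.Hom N) (hf : ∀ x, Function.Bijective (f.app x)) :
    ∃ g : N.Hom M, ∀ x, g.app x ∘ₗ f.app x = LinearMap.id ∧ f.app x ∘ₗ g.app x = LinearMap.id := by
  let F (x : ℕ) : M.V x ≃ₗ[k] N.V x := LinearEquiv.ofBijective (f.app x) (hf x)
  have hF (x : ℕ) (v : N.V x) : f.app x ((F x).symm v) = v := (F x).apply_symm_apply v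
  refine ⟨⟨fun x => (F x).symm, fun i v => (hf (i + 1)).1 ?_, fun i v => (hf i).1 ?_⟩,
    fun x => ⟨(F x).symm_comp, (F x).comp_symm⟩⟩
  · simp only [LinearEquiv.coe_coe, f.comm_fwd, hF]
  · simp only [LinearEquiv.coe_coe, f.comm_bwd, hF]

theorem Iso.symm (h : M.Iso N) : N.Iso M := by
  obtain ⟨f, hf⟩ := h
  obtain ⟨g, hg⟩ := f.exists_inverse hf
  exact ⟨g, fun x => Function.bijective_iff_has_inverse.2
    ⟨f.app x, LinearMap.congr_fun (hg x).2, LinearMap.congr_fun (hg x).1⟩⟩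

/-- The complementary endomorphism `1 - e`. -/
def Hom.oneSub (e : M.Hom M) : M.Hom M := (Hom.id M).add (e.smul (-1))

theorem Hom.oneSub_app (e : M.Hom M) (x : ℕ) : e.oneSub.app x = 1 - e.app x := by
  change 1 + (-1 : k) • e.app x = 1 - e.app x
  rw [neg_one_smul, sub_eq_add_neg]

/-- The endomorphism of `A ⊕ B` projecting onto `A`. -/
def dsumProjLeft (A B : ARep k n ε) : (A.dsum B).Hom (A.dsum B) where
  app _ := LinearMap.id.prodMap 0
  comm_fwd i _ := Prod.ext rfl (map_zero (B.fwd i)).symm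
  comm_bwd i _ := Prod.ext rfl (map_zero (B.bwd i)).symm

end ARep

namespace Subrep

/-- A subrepresentation, regarded as a representation. -/
def toRep (U : Subrep M) : ARep k n ε where
  V x := U.U x
  triv x hx v := Subtype.ext (M.triv x hx v)
  fwd i := (M.fwd i).restrict (U.fwd_mem i)
  bwd i := (M.bwd i).restrict (U.bwd_mem i)
  fwd_zero i h := LinearMap.ext fun v => Subtype.ext (LinearMap.congr_fun (M.fwd_zero i h) v)
  bwd_zero i h := LinearMap.ext fun v => Subtype.ext (LinearMap.congr_fun (M.bwd_zero i h) v)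

theorem isZero_toRep_iff {U : Subrep M} : U.toRep.IsZero ↔ ∀ x, U.U x = ⊥ :=
  forall_congr' fun x => by
    rw [Submodule.eq_bot_iff]
    exact ⟨fun h v hv => congrArg Subtype.val (h ⟨v, hv⟩), fun h v => Subtype.ext (h v.1 v.2)⟩

theorem iso_dsum_of_isCompl {U W : Subrep M} (h : ∀ x, IsCompl (U.U x) (W.U x)) :
    M.Iso (U.toRep.dsum W.toRep) := by
  let s : (U.toRep.dsum W.toRep).Hom M :=
    { app x := (U.U x).subtype.coprod (W.U x).subtype
      comm_fwd i v := (map_add (M.fwd i) v.1.1 v.2.1).symm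
      comm_bwd i v := (map_add (M.bwd i) v.1.1 v.2.1).symm }
  exact ARep.Iso.symm ⟨s, fun x => (Submodule.prodEquivOfIsCompl _ _ (h x)).bijective⟩

end Subrep

namespace ARep

/-- The kernel of a morphism. -/
def Hom.ker (f : M.Hom N) : Subrep M where
  U x := LinearMap.ker (f.app x)
  fwd_mem i v hv := by rw [LinearMap.mem_ker, f.comm_fwd, LinearMap.mem_ker.1 hv, map_zero]
  bwd_mem i v hv := by rw [LinearMap.mem_ker, f.comm_bwd, LinearMap.mem_ker.1 hv, map_zero]

/-- The image of a morphism. -/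
def Hom.range (f : M.Hom N) : Subrep N where
  U x := LinearMap.range (f.app x)
  fwd_mem := by rintro i _ ⟨v, rfl⟩; exact ⟨M.fwd i v, f.comm_fwd i v⟩
  bwd_mem := by rintro i _ ⟨v, rfl⟩; exact ⟨M.bwd i v, f.comm_bwd i v⟩

theorem Decomposable.exists_isIdempotentElem (h : M.Decomposable) :
    ∃ e : M.Hom M, (∀ x, IsIdempotentElem (e.app x)) ∧ (∃ x, e.app x ≠ 0) ∧
      ∃ x, e.app x ≠ 1 := by
  obtain ⟨A, B, hA, hB, f, hf⟩ := h
  obtain ⟨g, hg⟩ := f.exists_inverse hf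
  have hfg (x : ℕ) (w : (A.dsum B).V x) : f.app x (g.app x w) = w := LinearMap.congr_fun (hg x).2 w
  simp only [IsZero, not_forall] at hA hB
  obtain ⟨x, a, ha⟩ := hA
  obtain ⟨y, b, hb⟩ := hB
  have hfe (x : ℕ) (w : (A.dsum B).V x) :
      f.app x ((g.comp ((dsumProjLeft A B).comp f)).app x (g.app x w)) = (w.1, 0) := by
    change f.app x (g.app x ((dsumProjLeft A B).app x (f.app x (g.app x w)))) = (w.1, 0)
    rw [hfg, hfg]
    rfl
  refine ⟨g.comp ((dsumProjLeft A B).comp f), fun x => LinearMap.ext fun v => ?_, ⟨x, ?_⟩, ⟨y, ?_⟩⟩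
  · change g.app x ((dsumProjLeft A B).app x (f.app x (g.app x _))) = _
    rw [hfg]
    rfl
  · intro h0
    have := hfe x (a, 0)
    rw [h0] at this
    exact ha (congrArg Prod.fst (this.symm.trans (map_zero (f.app x))))
  · intro h1
    have := hfe y (0, b)
    rw [h1] at this
    exact hb (congrArg Prod.snd ((hfg y _).symm.trans this))

theorem decomposable_of_isIdempotentElem (e : M.Hom M) (he : ∀ x, IsIdempotentElem (e.app x))
    (h0 : ∃ x, e.app x ≠ 0) (h1 : ∃ x, e.app x ≠ 1) : M.Decomposable := by
  refine ⟨e.range.toRep, e.ker.toRep, ?_, ?_,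
    Subrep.iso_dsum_of_isCompl fun x => LinearMap.IsIdempotentElem.isCompl (he x)⟩
  · rw [Subrep.isZero_toRep_iff, not_forall]
    exact h0.imp fun x hx h => hx (LinearMap.range_eq_bot.1 h)
  · rw [Subrep.isZero_toRep_iff, not_forall]
    obtain ⟨x, hx⟩ := h1
    refine ⟨x, fun h => hx (LinearMap.ext fun v => LinearMap.ker_eq_bot.1 h ?_)⟩
    exact LinearMap.congr_fun (he x) v

theorem Indec.eq_zero_or_eq_one (hM : M.Indec) (e : M.Hom M)
    (he : ∀ x, IsIdempotentElem (e.app x)) : (∀ x, e.app x = 0) ∨ ∀ x, e.app x = 1 := by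
  by_contra! h
  exact hM.not_decomposable (decomposable_of_isIdempotentElem e he h.1 h.2)

end ARep

end Representations

section ShortExactSequences

variable {k : Type} [Field k] {n : ℕ} {ε : ℕ → Bool} {A B X : ARep k n ε}

namespace SES

theorem finrank_eq_add (σ : SES B A) (x : ℕ) :
    Module.finrank k (σ.E.V x) = Module.finrank k (B.V x) + Module.finrank k (A.V x) := by
  have hexact : LinearMap.ker (σ.π.app x) = LinearMap.range (σ.ι.app x) :=
    Submodule.ext (σ.exct x)
  rw [← (σ.π.app x).finrank_range_add_finrank_ker, hexact, LinearMap.finrank_range_of_inj (σ.inj x),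
    LinearMap.range_eq_top.2 (σ.surj x), finrank_top, add_comm]

theorem exists_lift (σ : SES B A) (g : X.Hom σ.E) (hg : ∀ x v, σ.π.app x (g.app x v) = 0) :
    ∃ h : X.Hom B, ∀ x v, σ.ι.app x (h.app x v) = g.app x v := by
  let i (x : ℕ) := LinearEquiv.ofInjective (σ.ι.app x) (σ.inj x)
  let g' (x : ℕ) := (g.app x).codRestrict (LinearMap.range (σ.ι.app x)) fun v =>
    (σ.exct x _).1 (hg x v)
  have hι (x : ℕ) (v : X.V x) : σ.ι.app x ((i x).symm (g' x v)) = g.app x v :=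
    congrArg Subtype.val ((i x).apply_symm_apply (g' x v))
  refine ⟨⟨fun x => (i x).symm ∘ₗ g' x, fun j v => σ.inj (j + 1) ?_, fun j v => σ.inj j ?_⟩, hι⟩
  · simp only [LinearMap.comp_apply, LinearEquiv.coe_coe, σ.ι.comm_fwd, hι, g.comm_fwd]
  · simp only [LinearMap.comp_apply, LinearEquiv.coe_coe, σ.ι.comm_bwd, hι, g.comm_bwd]

theorem exists_desc (σ : SES B A) (g : σ.E.Hom X) (hg : ∀ x v, g.app x (σ.ι.app x v) = 0) :
    ∃ h : A.Hom X, ∀ x v, h.app x (σ.π.app x v) = g.app x v := by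
  choose s hs using fun x =>
    (σ.π.app x).exists_rightInverse_of_surjective (LinearMap.range_eq_top.2 (σ.surj x))
  have hg_congr (x : ℕ) (v w : σ.E.V x) (hvw : σ.π.app x v = σ.π.app x w) :
      g.app x v = g.app x w := by
    obtain ⟨u, hu⟩ := (σ.exct x (v - w)).1 (by rw [map_sub, hvw, sub_self])
    rw [← sub_eq_zero, ← map_sub, ← hu, hg]
  have hπs (x : ℕ) (a : A.V x) : σ.π.app x (s x a) = a := LinearMap.congr_fun (hs x) a
  refine ⟨⟨fun x => g.app x ∘ₗ s x, fun j v => ?_, fun j v => ?_⟩,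
    fun x v => hg_congr x _ _ (hπs x _)⟩
  · rw [LinearMap.comp_apply, LinearMap.comp_apply, ← g.comm_fwd]
    exact hg_congr _ _ _ (by rw [hπs, σ.π.comm_fwd, hπs])
  · rw [LinearMap.comp_apply, LinearMap.comp_apply, ← g.comm_bwd]
    exact hg_congr _ _ _ (by rw [hπs, σ.π.comm_bwd, hπs])

theorem splits_of_projection (σ : SES B A) (e : σ.E.Hom σ.E)
    (hι : ∀ x u, e.app x (σ.ι.app x u) = σ.ι.app x u) (hπ : ∀ x v, σ.π.app x (e.app x v) = 0) :
    σ.Splits := by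
  obtain ⟨r, hr⟩ := σ.exists_lift e hπ
  exact ⟨r, fun x u => σ.inj x ((hr x _).trans (hι x u))⟩

theorem eq_zero_of_isIdempotentElem (σ : SES B A) {x : ℕ} {e : Module.End k (σ.E.V x)}
    (he : IsIdempotentElem e) (hι : ∀ u, e (σ.ι.app x u) = 0) (hπ : ∀ v, σ.π.app x (e v) = 0) :
    e = 0 := by
  ext v
  obtain ⟨u, hu⟩ := (σ.exct x (e v)).1 (hπ v)
  calc e v = e (e v) := (LinearMap.congr_fun he v).symm
    _ = 0 := by rw [← hu, hι]

theorem exists_induced_endomorphisms (σ : SES B A) (h0 : ∀ f : B.Hom A, ∀ x v, f.app x v = 0)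
    (e : σ.E.Hom σ.E) :
    ∃ (e₁ : B.Hom B) (e₂ : A.Hom A), (∀ x u, σ.ι.app x (e₁.app x u) = e.app x (σ.ι.app x u)) ∧
      ∀ x v, e₂.app x (σ.π.app x v) = σ.π.app x (e.app x v) := by
  have hπeι (x : ℕ) (u : B.V x) : σ.π.app x (e.app x (σ.ι.app x u)) = 0 :=
    h0 (σ.π.comp (e.comp σ.ι)) x u
  obtain ⟨e₁, he₁⟩ := σ.exists_lift (e.comp σ.ι) hπeι
  obtain ⟨e₂, he₂⟩ := σ.exists_desc (σ.π.comp e) hπeι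
  exact ⟨e₁, e₂, he₁, he₂⟩

theorem not_decomposable_of_forall_hom_eq_zero (σ : SES B A) (hB : B.Indec) (hA : A.Indec)
    (hσ : ¬σ.Splits) (h0 : ∀ f : B.Hom A, ∀ x v, f.app x v = 0) : ¬σ.E.Decomposable := by
  intro hdec
  obtain ⟨e, he, ⟨x, hx0⟩, ⟨y, hy1⟩⟩ := hdec.exists_isIdempotentElem
  obtain ⟨e₁, e₂, he₁, he₂⟩ := σ.exists_induced_endomorphisms h0 e
  have hsub := hB.eq_zero_or_eq_one e₁ fun x =>
    isIdempotentElem_of_injective (σ.inj x) (he₁ x) (he x)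
  have hquot := hA.eq_zero_or_eq_one e₂ fun x =>
    isIdempotentElem_of_surjective (σ.surj x) (he₂ x) (he x)
  obtain hsub | hsub := hsub <;> obtain hquot | hquot := hquot <;>
    simp only [hsub, LinearMap.zero_apply, map_zero, Module.End.one_apply] at he₁ <;>
    simp only [hquot, LinearMap.zero_apply, Module.End.one_apply] at he₂
  · exact hx0 (σ.eq_zero_of_isIdempotentElem (he x) (fun u => (he₁ x u).symm)
      fun v => (he₂ x v).symm)
  · refine hσ (σ.splits_of_projection e.oneSub (fun x u => ?_) fun x v => ?_)
    · rw [e.oneSub_app, LinearMap.sub_apply, ← he₁, sub_zero, Module.End.one_apply]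
    · rw [e.oneSub_app, LinearMap.sub_apply, map_sub, ← he₂, Module.End.one_apply, sub_self]
  · exact hσ (σ.splits_of_projection e (fun x u => (he₁ x u).symm) fun x v => (he₂ x v).symm)
  · have : 1 - e.app y = 0 := σ.eq_zero_of_isIdempotentElem (he y).one_sub
      (fun u => by rw [LinearMap.sub_apply, ← he₁, Module.End.one_apply, sub_self])
      fun v => by rw [LinearMap.sub_apply, map_sub, ← he₂, Module.End.one_apply, sub_self]
    exact hy1 (sub_eq_zero.1 this).symm

end SES

end ShortExactSequences

section Thinness

variable {k : Type} [Field k] {n : ℕ} {ε : ℕ → Bool} {M : ARep k n ε}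

namespace ARep

theorem fwd_eq_zero_or_bwd_eq_zero (M : ARep k n ε) (i : ℕ) : M.fwd i = 0 ∨ M.bwd i = 0 := by
  cases hi : ε i
  · exact .inl (M.fwd_zero i hi)
  · exact .inr (M.bwd_zero i hi)

theorem subsingleton_V (M : ARep k n ε) {x : ℕ} (hx : x = 0 ∨ n + 2 < x) : Subsingleton (M.V x) :=
  subsingleton_of_forall_eq 0 (M.triv x hx)

/-- The compatibility of a family of endomorphisms, one at each vertex, with the arrow between `i`
and `i + 1`. -/
def CommutesAt (M : ARep k n ε) (e : ∀ y, Module.End k (M.V y)) (i : ℕ) : Prop :=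
  M.fwd i ∘ₗ e i = e (i + 1) ∘ₗ M.fwd i ∧ e i ∘ₗ M.bwd i = M.bwd i ∘ₗ e (i + 1)

theorem CommutesAt.congr {e e' : ∀ y, Module.End k (M.V y)} {i : ℕ} (h : M.CommutesAt e i)
    (hi : e' i = e i) (hi' : e' (i + 1) = e (i + 1)) : M.CommutesAt e' i := by
  rwa [CommutesAt, hi, hi']

/-- The endomorphism `e₀` of `M.V x` is the component at `x` of a family of idempotents compatible
with all arrows in `I`. -/
def IdempotentExtends (M : ARep k n ε) {x : ℕ} (e₀ : Module.End k (M.V x)) (I : Set ℕ) : Prop :=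
  ∃ e : ∀ y, Module.End k (M.V y), (∀ y, IsIdempotentElem (e y)) ∧ e x = e₀ ∧
    ∀ i ∈ I, M.CommutesAt e i

theorem IdempotentExtends.of_subsingleton {x : ℕ} [Subsingleton (M.V x)]
    (e₀ : Module.End k (M.V x)) (I : Set ℕ) : M.IdempotentExtends e₀ I :=
  ⟨0, fun _ => .zero, Subsingleton.elim _ _, fun i _ =>
    ⟨(M.fwd i).comp_zero.trans (M.fwd i).zero_comp.symm,
      (M.bwd i).zero_comp.trans (M.bwd i).comp_zero.symm⟩⟩

theorem exists_isFiltration_idempotentExtends_Iio (M : ARep k n ε) (x : ℕ) :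
    ∃ S : Set (Submodule k (M.V x)), IsFiltration S ∧ ∀ e₀ : Module.End k (M.V x),
      IsIdempotentElem e₀ → S ⊆ e₀.invtSubmodule → M.IdempotentExtends e₀ (Set.Iio x) := by
  induction x with
  | zero =>
    have := M.subsingleton_V (.inl rfl)
    exact ⟨Set.univ, isFiltration_univ, fun e₀ _ _ => .of_subsingleton e₀ _⟩
  | succ x ih =>
    obtain ⟨S, hS, hext⟩ := ih
    have hx := M.fwd_eq_zero_or_bwd_eq_zero x
    refine ⟨inducedFiltration (M.fwd x) (M.bwd x) S, hS.induced hx, fun e₀ he₀ hinv => ?_⟩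
    obtain ⟨e₁, he₁, hinv₁, hfwd, hbwd⟩ := hS.exists_isIdempotentElem_of_induced hx he₀ hinv
    obtain ⟨e, he, rfl, hcomm⟩ := hext e₁ he₁ hinv₁
    refine ⟨Function.update e (x + 1) e₀, isIdempotentElem_update he he₀,
      Function.update_self .., fun i hi => ?_⟩
    obtain hlt | rfl := Nat.lt_succ_iff_lt_or_eq.1 hi
    · exact (hcomm i hlt).congr (Function.update_of_ne (by lia) ..)
        (Function.update_of_ne (by lia) ..)
    · rw [CommutesAt, Function.update_self, Function.update_of_ne (by lia)]
      exact ⟨hfwd, hbwd⟩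

theorem exists_isFiltration_idempotentExtends_Ici (M : ARep k n ε) (x : ℕ) :
    ∃ S : Set (Submodule k (M.V x)), IsFiltration S ∧ ∀ e₀ : Module.End k (M.V x),
      IsIdempotentElem e₀ → S ⊆ e₀.invtSubmodule → M.IdempotentExtends e₀ (Set.Ici x) := by
  induction hd : n + 3 - x generalizing x with
  | zero =>
    have := M.subsingleton_V (x := x) (.inr (by lia))
    exact ⟨Set.univ, isFiltration_univ, fun e₀ _ _ => .of_subsingleton e₀ _⟩
  | succ d ih =>
    obtain ⟨S, hS, hext⟩ := ih (x + 1) (by lia)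
    have hx := (M.fwd_eq_zero_or_bwd_eq_zero x).symm
    refine ⟨inducedFiltration (M.bwd x) (M.fwd x) S, hS.induced hx, fun e₀ he₀ hinv => ?_⟩
    obtain ⟨e₁, he₁, hinv₁, hbwd, hfwd⟩ := hS.exists_isIdempotentElem_of_induced hx he₀ hinv
    obtain ⟨e, he, rfl, hcomm⟩ := hext e₁ he₁ hinv₁
    refine ⟨Function.update e x e₀, isIdempotentElem_update he he₀, Function.update_self ..,
      fun i hi => ?_⟩
    obtain rfl | hlt := (Set.mem_Ici.1 hi).eq_or_lt
    · rw [CommutesAt, Function.update_self, Function.update_of_ne (by lia)]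
      exact ⟨hfwd.symm, hbwd.symm⟩
    · exact (hcomm i hlt).congr (Function.update_of_ne (by lia) ..)
        (Function.update_of_ne (by lia) ..)

theorem IdempotentExtends.univ {x : ℕ} {e₀ : Module.End k (M.V x)}
    (hleft : M.IdempotentExtends e₀ (Set.Iio x)) (hright : M.IdempotentExtends e₀ (Set.Ici x)) :
    M.IdempotentExtends e₀ Set.univ := by
  obtain ⟨l, hl, hlx, hlcomm⟩ := hleft
  obtain ⟨r, hr, hrx, hrcomm⟩ := hright
  refine ⟨fun y => if y ≤ x then l y else r y, fun y => ?_, (if_pos le_rfl).trans hlx,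
    fun i _ => ?_⟩
  · dsimp only
    split_ifs
    exacts [hl y, hr y]
  · obtain hi | hi := lt_or_ge i x
    · exact (hlcomm i hi).congr (if_pos hi.le) (if_pos hi)
    · refine (hrcomm i hi).congr ?_ (if_neg (by lia))
      split_ifs with hix
      · obtain rfl := hi.antisymm hix
        rw [hlx, hrx]
      · rfl

theorem decomposable_of_one_lt_finrank {x : ℕ} (hx : 1 < Module.finrank k (M.V x)) :
    M.Decomposable := by
  obtain ⟨S, hS, hextS⟩ := M.exists_isFiltration_idempotentExtends_Iio x
  obtain ⟨T, hT, hextT⟩ := M.exists_isFiltration_idempotentExtends_Ici x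
  obtain ⟨e₀, he₀, hinvS, hinvT, hne0, hne1⟩ :=
    hS.exists_isIdempotentElem_ne_zero_ne_one hT.isChain hx
  obtain ⟨e, he, rfl, hcomm⟩ := (hextS e₀ he₀ hinvS).univ (hextT e₀ he₀ hinvT)
  exact decomposable_of_isIdempotentElem
    ⟨e, fun i v => (LinearMap.congr_fun (hcomm i trivial).1 v).symm,
      fun i v => LinearMap.congr_fun (hcomm i trivial).2 v⟩ he ⟨x, hne0⟩ ⟨x, hne1⟩

end ARep

end Thinness

/-- for a non-split short exact sequence `0 → M₁ → E → M₂ → 0` between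
indecomposables, `E` is decomposable iff `Hom(M₁, M₂) ≠ 0`. -/
theorem stmt_13 (k : Type) [Field k] (n : ℕ) (ε : ℕ → Bool) (M1 M2 : ARep k n ε)
    (h1 : M1.Indec) (h2 : M2.Indec) (σ : SES M1 M2) (hns : ¬σ.Splits) :
    (∃ A B : ARep k n ε, ¬A.IsZero ∧ ¬B.IsZero ∧ σ.E.Iso (A.dsum B)) ↔
      ∃ f : M1.Hom M2, ∃ x v, f.app x v ≠ 0 := by
  constructor
  · intro hdec
    by_contra! h0
    exact σ.not_decomposable_of_forall_hom_eq_zero h1 h2 hns h0 hdec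
  · rintro ⟨f, x, v, hfv⟩
    have hM1 : 0 < Module.finrank k (M1.V x) :=
      Module.finrank_pos_iff_exists_ne_zero.2 ⟨v, fun h => hfv (by rw [h, map_zero])⟩
    have hM2 : 0 < Module.finrank k (M2.V x) :=
      Module.finrank_pos_iff_exists_ne_zero.2 ⟨f.app x v, hfv⟩
    exact ARep.decomposable_of_one_lt_finrank (x := x) (by rw [σ.finrank_eq_add]; lia)

end CambrianA
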